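/- Let S = { x ∈ ℝⁿ : g₁(x) ≥ 0, …, gₘ(x) ≥ 0 } be a compact convex set defined by real polynomials gᵢ with nonempty interior, and set Zᵢ = {x ∈ ℝⁿ : gᵢ(x) = 0}. Assume: (1) gᵢ(x) > 0 whenever x is in the interior of S; (2) ∇gᵢ(u) ≠ 0 whenever u ∈ Zᵢ ∩ S; (3) whenever gᵢ is not sos-concave, Zᵢ ∩ ∂S has strictly convex shape with respect to S. If for every u ∈ ∂S and every i with gᵢ(u) = 0, either gᵢ is sos-concave or −vᵀ∇²gᵢ(u)v > 0 for every nonzero v with ∇gᵢ(u)ᵀv = 0 (i.e., Zᵢ has positive curvature at u), then S is SDP representable. -/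

import Mathlib

open MvPolynomial Metric Set Pointwise Filter

noncomputable section

/-- `ℝⁿ` with the Euclidean norm. -/
abbrev Rn (n : ℕ) : Type := EuclideanSpace ℝ (Fin n)

/-- A set `S ⊆ ℝⁿ` is SDP representable if it is the projection of a spectrahedron:
there are symmetric matrices `A₀, A i, B j` with
`S = { x | ∃ u, A₀ + Σ xᵢ Aᵢ + Σ uⱼ Bⱼ ⪰ 0 }`. -/
def IsSDPRepresentable {n : ℕ} (S : Set (Rn n)) : Prop :=
  ∃ (N d : ℕ) (A₀ : Matrix (Fin d) (Fin d) ℝ)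
    (A : Fin n → Matrix (Fin d) (Fin d) ℝ) (B : Fin N → Matrix (Fin d) (Fin d) ℝ),
    A₀.IsSymm ∧ (∀ i, (A i).IsSymm) ∧ (∀ j, (B j).IsSymm) ∧
    S = {x : Rn n | ∃ u : Fin N → ℝ,
      (A₀ + ∑ i, x i • A i + ∑ j, u j • B j).PosSemidef}

/-- Evaluation of a polynomial at a point of `ℝⁿ`. -/
def peval {n : ℕ} (g : MvPolynomial (Fin n) ℝ) (x : Rn n) : ℝ :=
  MvPolynomial.eval (fun i => x i) g

/-- The gradient `∇g(u)` of a polynomial. -/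
def pgrad {n : ℕ} (g : MvPolynomial (Fin n) ℝ) (u : Rn n) : Fin n → ℝ :=
  fun i => MvPolynomial.eval (fun j => u j) (MvPolynomial.pderiv i g)

/-- The Hessian `∇²g(u)` of a polynomial. -/
def phess {n : ℕ} (g : MvPolynomial (Fin n) ℝ) (u : Rn n) : Matrix (Fin n) (Fin n) ℝ :=
  Matrix.of fun i j =>
    MvPolynomial.eval (fun k => u k) (MvPolynomial.pderiv i (MvPolynomial.pderiv j g))

/-- A polynomial `g` is sos-concave if `-∇²g(x) = W(x)ᵀ W(x)` for some
(possibly nonsquare) matrix polynomial `W`. -/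
def SosConcave {n : ℕ} (g : MvPolynomial (Fin n) ℝ) : Prop :=
  ∃ (k : ℕ) (W : Fin k → Fin n → MvPolynomial (Fin n) ℝ),
    ∀ i j, - MvPolynomial.pderiv i (MvPolynomial.pderiv j g) = ∑ l, W l i * W l j

/-- `g` is quasi-concave at `u` : `-vᵀ∇²g(u)v ≥ 0` for every `v` with `∇g(u)ᵀv = 0`. -/
def QuasiConcaveAt {n : ℕ} (g : MvPolynomial (Fin n) ℝ) (u : Rn n) : Prop :=
  ∀ v : Fin n → ℝ, (∑ i, pgrad g u i * v i) = 0 →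
    0 ≤ -(∑ i, ∑ j, v i * phess g u i j * v j)

/-- `g` is strictly quasi-concave at `u` : if `∇g(u) ≠ 0` then `-vᵀ∇²g(u)v > 0`
for all nonzero `v ⊥ ∇g(u)`; if `∇g(u) = 0` then `-∇²g(u)` is positive definite. -/
def StrictlyQuasiConcaveAt {n : ℕ} (g : MvPolynomial (Fin n) ℝ) (u : Rn n) : Prop :=
  (pgrad g u ≠ 0 ∧ ∀ v : Fin n → ℝ, v ≠ 0 → (∑ i, pgrad g u i * v i) = 0 →
      0 < -(∑ i, ∑ j, v i * phess g u i j * v j)) ∨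
  (pgrad g u = 0 ∧ (-(phess g u)).PosDef)

/-- The convex boundary `∂_c T` : points of `T` minimizing some unit linear functional. -/
def convexBoundary {n : ℕ} (T : Set (Rn n)) : Set (Rn n) :=
  {u ∈ T | ∃ l : Rn n, ‖l‖ = 1 ∧ ∀ x ∈ T, (∑ i, l i * u i) ≤ ∑ i, l i * x i}

/-- `v` is a nonsingular point of `∂T` (w.r.t. defining polynomials `g`):
exactly one defining polynomial vanishes at `v`, with nonvanishing gradient. -/
def IsNonsingularBoundaryPoint {n m : ℕ} (g : Fin m → MvPolynomial (Fin n) ℝ)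
    (T : Set (Rn n)) (v : Rn n) : Prop :=
  v ∈ frontier T ∧ ∃ i, peval (g i) v = 0 ∧ pgrad (g i) v ≠ 0 ∧
    ∀ j, peval (g j) v = 0 → j = i

/-- A polynomial is SOS if it is a finite sum of squares of polynomials. -/
def IsSOSPoly {n : ℕ} (p : MvPolynomial (Fin n) ℝ) : Prop :=
  ∃ (k : ℕ) (q : Fin k → MvPolynomial (Fin n) ℝ), p = ∑ i, (q i) ^ 2

/-- The polynomial `δ² - ‖x - u‖²`. -/
def ballPoly {n : ℕ} (u : Rn n) (δ : ℝ) : MvPolynomial (Fin n) ℝ :=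
  MvPolynomial.C (δ ^ 2) - ∑ i, (MvPolynomial.X i - MvPolynomial.C (u i)) ^ 2

/-- The family `h₁, …, h_{m₂}` extended by the ball polynomial `h_m(x) = δ² - ‖x-u‖²`. -/
def extFamily {n m2 : ℕ} (h : Fin m2 → MvPolynomial (Fin n) ℝ) (u : Rn n) (δ : ℝ) :
    Fin (m2 + 1) → MvPolynomial (Fin n) ℝ :=
  Fin.snoc h (ballPoly u δ)

/-- The positive definite Lagrange Hessian (PDLH) condition at `u` with radius `δu`,
for the set `T = {x | f(x) = 0, h(x) ≥ 0}`. -/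
def PDLHAt {n m1 m2 : ℕ} (f : Fin m1 → MvPolynomial (Fin n) ℝ)
    (h : Fin m2 → MvPolynomial (Fin n) ℝ) (T : Set (Rn n)) (u : Rn n) (δu : ℝ) : Prop :=
  ∀ l : Rn n, ‖l‖ = 1 → ∀ δ : ℝ, 0 < δ → δ ≤ δu →
    ∀ v ∈ T ∩ closedBall u δ,
      (∀ x ∈ T ∩ closedBall u δ, (∑ i, l i * v i) ≤ ∑ i, l i * x i) →
      ∃ (lam : Fin m1 → ℝ) (mu : Fin (m2 + 1) → ℝ),
        (∀ j, 0 ≤ mu j) ∧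
        (∀ j, mu j * peval (extFamily h u δ j) v = 0) ∧
        (∀ i, l i = (∑ k, lam k * pgrad (f k) v i) +
            ∑ j, mu j * pgrad (extFamily h u δ j) v i) ∧
        ∀ x ∈ closedBall u δ,
          (Matrix.of (fun i i' : Fin n =>
            -(∑ k, lam k * phess (f k) x i i') -
              ∑ j, mu j * phess (extFamily h u δ j) x i i')).PosDef

/-- `Z(g) ∩ ∂S` has strictly convex shape with respect to `S`. -/
def StrictlyConvexShape {n : ℕ} (g : MvPolynomial (Fin n) ℝ) (S : Set (Rn n)) : Prop :=
  ∃ Y U : Set (Rn n), IsOpen U ∧ Y = {x | peval g x = 0} ∩ U ∧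
    {x | peval g x = 0} ∩ frontier S ⊆ Y ∧
    (∀ p ∈ closure Y, pgrad g p ≠ 0) ∧
    ∀ p ∈ closure Y,
      (∃ ε : ℝ, (ε = 1 ∨ ε = -1) ∧
        ∀ q ∈ S ∪ closure Y, ε * (∑ i, pgrad g p i * (q i - p i)) ≤ 0) ∧
      ∀ q ∈ S ∪ closure Y, (∑ i, pgrad g p i * (q i - p i)) = 0 → q = p

open scoped Matrix

/-- Spectrahedra in a real vector space. -/
def SpecSet {V : Type} [AddCommGroup V] [Module ℝ V] (P : Set V) : Prop :=
  ∃ (ι : Type) (_ : Fintype ι) (A₀ : Matrix ι ι ℝ) (A : V →ₗ[ℝ] Matrix ι ι ℝ),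
    A₀.IsSymm ∧ (∀ v, (A v).IsSymm) ∧ P = {v | (A₀ + A v).PosSemidef}

lemma posSemidef_blockDiagonal' {β : Type} [Fintype β] [DecidableEq β] {ι : β → Type}
    [∀ b, Fintype (ι b)] (M : ∀ b, Matrix (ι b) (ι b) ℝ) :
    (Matrix.blockDiagonal' M).PosSemidef ↔ ∀ b, (M b).PosSemidef := by
  constructor
  · intro h b
    have := h.submatrix (fun i : ι b => (⟨b, i⟩ : Σ b, ι b))
    convert this using 1
    ext i j
    simp [Matrix.blockDiagonal'_apply]
  · intro h
    rw [Matrix.posSemidef_iff_dotProduct_mulVec]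
    refine ⟨?_, fun x => ?_⟩
    · have : ∀ b, (M b).IsHermitian := fun b => (h b).isHermitian
      unfold Matrix.IsHermitian
      rw [Matrix.blockDiagonal'_conjTranspose]
      congr 1
      funext b
      exact this b
    · have key : star x ⬝ᵥ Matrix.blockDiagonal' M *ᵥ x
          = ∑ b, star (fun i => x ⟨b, i⟩) ⬝ᵥ (M b) *ᵥ (fun i => x ⟨b, i⟩) := by
        simp only [dotProduct, Matrix.mulVec, Fintype.sum_sigma]
        refine Finset.sum_congr rfl fun b _ => Finset.sum_congr rfl fun i _ => ?_
        congr 1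
        rw [Finset.sum_eq_single b]
        · simp [Matrix.blockDiagonal'_apply]
        · intro b' _ hb
          refine Finset.sum_eq_zero fun j _ => ?_
          rw [Matrix.blockDiagonal'_apply_ne _ _ _ hb.symm, zero_mul]
        · simp
      rw [key]
      exact Finset.sum_nonneg fun b _ => (h b).dotProduct_mulVec_nonneg _

lemma SpecSet.iInter {V : Type} [AddCommGroup V] [Module ℝ V] {β : Type} [Fintype β]
    {P : β → Set V} (h : ∀ b, SpecSet (P b)) : SpecSet (⋂ b, P b) := by
  classical
  choose ι hι A₀ A h0 hA hP using h
  refine ⟨Σ b, ι b, inferInstance, Matrix.blockDiagonal' A₀,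
    { toFun := fun v => Matrix.blockDiagonal' fun b => A b v
      map_add' := fun v w => by
        rw [← Matrix.blockDiagonal'_add]; congr 1; funext b; simp
      map_smul' := fun c v => by
        simp only [RingHom.id_apply]
        rw [← Matrix.blockDiagonal'_smul]; congr 1; funext b; simp }, ?_, ?_, ?_⟩
  · unfold Matrix.IsSymm
    rw [Matrix.blockDiagonal'_transpose]; congr 1; funext b; exact h0 b
  · intro v
    show (Matrix.blockDiagonal' fun b => A b v).IsSymm
    unfold Matrix.IsSymm
    rw [Matrix.blockDiagonal'_transpose]; congr 1; funext b; exact hA b v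
  · ext v
    simp only [Set.mem_iInter, hP, Set.mem_ofPred_eq, LinearMap.coe_mk, AddHom.coe_mk]
    rw [← Matrix.blockDiagonal'_add, posSemidef_blockDiagonal']
    rfl

lemma SpecSet.inter {V : Type} [AddCommGroup V] [Module ℝ V]
    {P Q : Set V} (hP : SpecSet P) (hQ : SpecSet Q) : SpecSet (P ∩ Q) := by
  have := SpecSet.iInter (P := fun b : Bool => cond b P Q) (by rintro (_ | _) <;> assumption)
  rwa [← Set.inter_eq_iInter] at this

lemma SpecSet.half {V : Type} [AddCommGroup V] [Module ℝ V] (c : ℝ) (f : V →ₗ[ℝ] ℝ) :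
    SpecSet {v | 0 ≤ c + f v} := by
  refine ⟨Unit, inferInstance, Matrix.diagonal fun _ => c,
    (Matrix.diagonalLinearMap Unit ℝ ℝ).comp (LinearMap.pi fun _ => f), ?_, ?_, ?_⟩
  · exact Matrix.isSymm_diagonal _
  · intro v; exact Matrix.isSymm_diagonal _
  · ext v
    simp only [Set.mem_ofPred_eq]
    show _ ↔ (Matrix.diagonal (fun _ : Unit => c) + Matrix.diagonal fun _ => f v).PosSemidef
    rw [Matrix.diagonal_add, Matrix.posSemidef_diagonal_iff]
    simp

lemma SpecSet.eq {V : Type} [AddCommGroup V] [Module ℝ V] (c : ℝ) (f : V →ₗ[ℝ] ℝ) :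
    SpecSet {v | c + f v = 0} := by
  have := (SpecSet.half c f).inter (SpecSet.half (-c) (-f))
  convert this using 1
  ext v
  simp only [Set.mem_ofPred_eq, Set.mem_inter_iff, LinearMap.neg_apply]
  constructor
  · intro h; constructor <;> linarith
  · rintro ⟨h1, h2⟩; linarith

lemma SpecSet.sdp {n : ℕ} {κ : Type} [Fintype κ] {P : Set ((Fin n → ℝ) × (κ → ℝ))}
    (hP : SpecSet P) (S : Set (Rn n))
    (hS : S = {x : Rn n | ∃ u, ((fun i => x i), u) ∈ P}) : IsSDPRepresentable S := by
  classical
  obtain ⟨ι, _, A₀, A, h0, hA, rfl⟩ := hP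
  let e := Fintype.equivFin ι
  let e' := Fintype.equivFin κ
  refine ⟨Fintype.card κ, Fintype.card ι, A₀.submatrix e.symm e.symm,
    fun i => (A (Pi.single i 1, 0)).submatrix e.symm e.symm,
    fun j => (A (0, Pi.single (e'.symm j) 1)).submatrix e.symm e.symm,
    h0.submatrix _, fun i => (hA _).submatrix _, fun i => (hA _).submatrix _, ?_⟩
  have key : ∀ (x : Fin n → ℝ) (u : κ → ℝ), A₀.submatrix e.symm e.symm +
      ∑ i, x i • (A (Pi.single i 1, 0)).submatrix e.symm e.symm
      + ∑ j, u (e'.symm j) • (A (0, Pi.single (e'.symm j) 1)).submatrix e.symm e.symm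
      = (A₀ + A (x, u)).submatrix e.symm e.symm := by
    intro x u
    have h1 : (x, u) = ∑ i, x i • ((Pi.single i 1, 0) : (Fin n → ℝ) × (κ → ℝ))
        + ∑ j, u j • ((0, Pi.single j 1) : (Fin n → ℝ) × (κ → ℝ)) := by
      ext i
      · simp [Prod.fst_sum, Finset.sum_apply, Pi.single_apply]
      · simp [Prod.snd_sum, Finset.sum_apply, Pi.single_apply]
    rw [h1, map_add, map_sum, map_sum]
    simp only [map_smul]
    rw [
      Equiv.sum_comp e'.symm (fun j => u j • (A (0, Pi.single j 1)).submatrix e.symm e.symm)]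
    ext a b
    simp [Matrix.sum_apply, add_assoc]
  rw [hS]
  ext x
  simp only [Set.mem_ofPred_eq]
  constructor
  · rintro ⟨u, hu⟩
    refine ⟨fun j => u (e'.symm j), ?_⟩
    rw [key (fun i => x i) u]
    exact hu.submatrix _
  · rintro ⟨u, hu⟩
    refine ⟨fun j => u (e' j), ?_⟩
    have := key (fun i => x i) (fun j => u (e' j))
    simp only [Equiv.apply_symm_apply] at this
    rw [this, Matrix.posSemidef_submatrix_equiv] at hu
    exact hu

lemma eval_fun_of_support {n : ℕ} (T : Finset (Fin n →₀ ℕ)) (f : MvPolynomial (Fin n) ℝ)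
    (hf : f.support ⊆ T) (L : MvPolynomial (Fin n) ℝ →ₗ[ℝ] ℝ) :
    ∑ α : T, L (monomial α.1 1) * coeff α.1 f = L f := by
  rw [Finset.sum_coe_sort T (fun α => L (monomial α 1) * coeff α f)]
  conv_rhs => rw [f.as_sum, map_sum]
  rw [← Finset.sum_subset hf]
  · refine Finset.sum_congr rfl fun α _ => ?_
    have : (monomial α (coeff α f) : MvPolynomial (Fin n) ℝ) = coeff α f • monomial α 1 := by
      rw [smul_monomial, smul_eq_mul, mul_one]
    rw [this, map_smul, smul_eq_mul, mul_comm]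
  · intro α _ h
    rw [notMem_support_iff.mp h, mul_zero]

/-- The linear functional on polynomials with prescribed moments. -/
def momFun {n : ℕ} {K : Type} {T : Finset (Fin n →₀ ℕ)} (u : K × T → ℝ) (k : K) :
    MvPolynomial (Fin n) ℝ →ₗ[ℝ] ℝ := ∑ α : T, u (k, α) • lcoeff ℝ α.1

lemma momFun_apply {n : ℕ} {K : Type} {T : Finset (Fin n →₀ ℕ)} (u : K × T → ℝ) (k : K)
    (f : MvPolynomial (Fin n) ℝ) : momFun u k f = ∑ α : T, u (k, α) * coeff α.1 f := by
  simp [momFun]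

/-- `momFun` as a linear function of the moments. -/
def momEv {n : ℕ} {K : Type} (T : Finset (Fin n →₀ ℕ)) (k : K) (f : MvPolynomial (Fin n) ℝ) :
    ((Fin n → ℝ) × (K × T → ℝ)) →ₗ[ℝ] ℝ where
  toFun v := momFun v.2 k f
  map_add' v v' := by
    simp only [momFun_apply, Prod.snd_add, Pi.add_apply, add_mul, Finset.sum_add_distrib]
  map_smul' c v := by
    simp only [momFun_apply, Prod.smul_snd, Pi.smul_apply, smul_eq_mul, Finset.mul_sum, mul_assoc,
          RingHom.id_apply]

lemma momEv_apply {n : ℕ} {K : Type} (T : Finset (Fin n →₀ ℕ)) (k : K)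
    (f : MvPolynomial (Fin n) ℝ) (v) : momEv T k f v = momFun v.2 k f := rfl

/-- Moment matrices as linear functions of the moments. -/
def momMat {n : ℕ} {K : Type} (T : Finset (Fin n →₀ ℕ)) (k : K) {A : Type}
    (e : A → MvPolynomial (Fin n) ℝ) (w : MvPolynomial (Fin n) ℝ) :
    ((Fin n → ℝ) × (K × T → ℝ)) →ₗ[ℝ] Matrix A A ℝ where
  toFun v := Matrix.of fun a b => momEv T k (w * (e a * e b)) v
  map_add' v v' := by ext a b; simp only [Matrix.of_apply, map_add, Matrix.add_apply]
  map_smul' r v := by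
    ext a b; simp only [Matrix.of_apply, map_smul, Matrix.smul_apply, RingHom.id_apply]

lemma momMat_apply {n : ℕ} {K : Type} (T : Finset (Fin n →₀ ℕ)) (k : K) {A : Type}
    (e : A → MvPolynomial (Fin n) ℝ) (w : MvPolynomial (Fin n) ℝ) (v) :
    momMat T k e w v = Matrix.of fun a b => momFun v.2 k (w * (e a * e b)) := rfl

lemma exists_test_basis (n D : ℕ) : ∃ (N : ℕ) (e : Fin N → MvPolynomial (Fin n) ℝ),
    ∀ q : MvPolynomial (Fin n) ℝ, q.totalDegree ≤ D ↔ ∃ c : Fin N → ℝ, ∑ a, c a • e a = q := by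
  let bs := Module.finBasis ℝ (restrictTotalDegree (Fin n) ℝ D)
  refine ⟨_, fun a => (bs a : MvPolynomial (Fin n) ℝ), fun q => ⟨fun hq => ?_, ?_⟩⟩
  · have hqE : q ∈ restrictTotalDegree (Fin n) ℝ D := (mem_restrictTotalDegree _ _ _).2 hq
    refine ⟨bs.repr ⟨q, hqE⟩, ?_⟩
    have := congrArg (restrictTotalDegree (Fin n) ℝ D).subtype (bs.sum_repr ⟨q, hqE⟩)
    rw [map_sum] at this
    exact this
  · rintro ⟨c, rfl⟩
    rw [← mem_restrictTotalDegree]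
    exact Submodule.sum_mem _ fun a _ => Submodule.smul_mem _ _ (bs a).2

lemma momMat_posSemidef {n D N : ℕ} (e : Fin N → MvPolynomial (Fin n) ℝ)
    (he : ∀ q : MvPolynomial (Fin n) ℝ, q.totalDegree ≤ D ↔ ∃ c : Fin N → ℝ, ∑ a, c a • e a = q)
    (L : MvPolynomial (Fin n) ℝ →ₗ[ℝ] ℝ) (w : MvPolynomial (Fin n) ℝ) :
    (Matrix.of fun a b => L (w * (e a * e b))).PosSemidef ↔
        ∀ q : MvPolynomial (Fin n) ℝ, q.totalDegree ≤ D → 0 ≤ L (w * (q * q)) := by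
  have hform : ∀ c : Fin N → ℝ, star c ⬝ᵥ (Matrix.of fun a b => L (w * (e a * e b))) *ᵥ c
      = L (w * ((∑ a, c a • e a) * (∑ a, c a • e a))) := by
    intro c
    rw [Finset.sum_mul_sum, Finset.mul_sum, map_sum]
    simp only [dotProduct, Matrix.mulVec, Finset.mul_sum, map_sum]
    refine Finset.sum_congr rfl fun a _ => Finset.sum_congr rfl fun b _ => ?_
    rw [smul_mul_smul_comm, mul_smul_comm, map_smul]
    simp only [Pi.star_apply, star_trivial, Matrix.of_apply, smul_eq_mul]
    ring
  rw [Matrix.posSemidef_iff_dotProduct_mulVec]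
  constructor
  · rintro ⟨-, h⟩ q hq
    obtain ⟨c, rfl⟩ := (he q).1 hq
    have := h c
    rwa [hform] at this
  · intro h
    refine ⟨?_, fun c => ?_⟩
    · ext a b
      simp [mul_comm (e a) (e b)]
    · rw [hform]
      exact h _ ((he _).2 ⟨c, rfl⟩)

lemma sdp_of_functionals {n : ℕ} (S : Set (Rn n)) (K J γ : Type) [Fintype K] [Fintype J]
    [Fintype γ] (w : K → γ → MvPolynomial (Fin n) ℝ) (D : ℕ)
    (p : K → J → MvPolynomial (Fin n) ℝ)
    (hS : S = {x : Rn n | ∃ L : K → (MvPolynomial (Fin n) ℝ →ₗ[ℝ] ℝ),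
      ∑ k, L k 1 = 1 ∧ (∀ i, x i = ∑ k, L k (X i)) ∧
      (∀ k c q, q.totalDegree ≤ D → 0 ≤ L k (w k c * (q * q))) ∧ ∀ k j, 0 ≤ L k (p k j)}) :
    IsSDPRepresentable S := by
  classical
  obtain ⟨N, e, he⟩ := exists_test_basis n D
  let F : (Unit ⊕ Fin n) ⊕ ((K × γ × Fin N × Fin N) ⊕ (K × J)) → MvPolynomial (Fin n) ℝ :=
    Sum.elim (Sum.elim (fun _ => 1) (fun i => X i))
      (Sum.elim (fun z => w z.1 z.2.1 * (e z.2.2.1 * e z.2.2.2)) (fun z => p z.1 z.2))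
  obtain ⟨T, hT⟩ : ∃ T : Finset (Fin n →₀ ℕ), ∀ φ, (F φ).support ⊆ T :=
    ⟨Finset.univ.biUnion fun φ => (F φ).support, fun φ =>
      Finset.subset_biUnion_of_mem (fun φ => (F φ).support) (Finset.mem_univ φ)⟩
  let xEv : Fin n → (((Fin n → ℝ) × (K × T → ℝ)) →ₗ[ℝ] ℝ) := fun i =>
    (LinearMap.proj i : (Fin n → ℝ) →ₗ[ℝ] ℝ).comp (LinearMap.fst ℝ (Fin n → ℝ) (K × T → ℝ))
  have hxEv : ∀ i v, xEv i v = v.1 i := fun _ _ => rfl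
  have hP1 : SpecSet {v : (Fin n → ℝ) × (K × T → ℝ) | (-1 : ℝ) + (∑ k, momEv T k 1) v = 0} :=
    SpecSet.eq _ _
  have hP2 : SpecSet (⋂ i : Fin n, {v : (Fin n → ℝ) × (K × T → ℝ) |
      (0 : ℝ) + ((∑ k, momEv T k (X i)) - xEv i : ((Fin n → ℝ) × (K × T → ℝ)) →ₗ[ℝ] ℝ) v = 0}) :=
    SpecSet.iInter fun i => SpecSet.eq _ _
  have hP3 : SpecSet (⋂ z : K × γ, {v : (Fin n → ℝ) × (K × T → ℝ) |
      (0 + momMat T z.1 e (w z.1 z.2) v).PosSemidef}) := by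
    refine SpecSet.iInter fun z => ?_
    refine ⟨Fin N, inferInstance, 0, momMat T z.1 e (w z.1 z.2), Matrix.isSymm_zero,
      fun v => ?_, rfl⟩
    ext a b
    simp [momMat_apply, mul_comm (e a) (e b)]
  have hP4 : SpecSet (⋂ z : K × J, {v : (Fin n → ℝ) × (K × T → ℝ) |
      0 ≤ (0 : ℝ) + momEv T z.1 (p z.1 z.2) v}) :=
    SpecSet.iInter fun z => SpecSet.half _ _
  have hP := ((hP1.inter hP2).inter hP3).inter hP4
  refine hP.sdp S ?_
  rw [hS]
  ext x
  simp only [Set.mem_inter_iff, Set.mem_iInter, Set.mem_ofPred_eq, zero_add,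
      momMat_apply, momMat_posSemidef e he,
      LinearMap.sum_apply, LinearMap.sub_apply, momEv_apply, Prod.forall, hxEv, sub_eq_zero, and_assoc]
  constructor
  · rintro ⟨L, h1, h2, h3, h4⟩
    refine ⟨fun z => L z.1 (monomial z.2.1 1), ?_⟩
    have hag : ∀ k φ, momFun (fun z : K × T => L z.1 (monomial z.2.1 1)) k (F φ)
        = L k (F φ) := by
      intro k φ
      rw [momFun_apply]
      exact eval_fun_of_support T (F φ) (hT φ) (L k)
    refine ⟨?_, fun i => ?_, fun k c => ?_, fun k j => ?_⟩
    · have h5 : ∑ k, momFun (fun z : K × T => L z.1 (monomial z.2.1 1)) k 1 = ∑ k, L k 1 :=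
        Finset.sum_congr rfl fun k _ => hag k (Sum.inl (Sum.inl ()))
      rw [h5, h1]
      norm_num
    · rw [h2 i]
      exact Finset.sum_congr rfl fun k _ => (hag k (Sum.inl (Sum.inr i)))
    · rw [← momMat_posSemidef e he]
      have := (momMat_posSemidef e he (L k) (w k c)).2 (h3 k c)
      convert this using 1
      ext a b
      exact hag k (Sum.inr (Sum.inl (k, c, a, b)))
    · have := hag k (Sum.inr (Sum.inr (k, j)))
      exact (h4 k j).trans_eq this.symm
  · rintro ⟨u, h1, h2, h3, h4⟩
    exact ⟨momFun u, by linarith, fun i => (h2 i).symm, h3, h4⟩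

/-- the box constraint polynomial `δ² - (x_c - u_c)²` -/
def boxPoly {n : ℕ} (u : Fin n → ℝ) (δ : ℝ) (c : Fin n) : MvPolynomial (Fin n) ℝ :=
  C (δ ^ 2) - (X c - C (u c)) ^ 2

/-- `L` is nonnegative on the truncated quadratic module of the box. -/
def PosF {n : ℕ} (u : Fin n → ℝ) (δ : ℝ) (D : ℕ) (L : MvPolynomial (Fin n) ℝ →ₗ[ℝ] ℝ) : Prop :=
  ∀ q : MvPolynomial (Fin n) ℝ, q.totalDegree ≤ D →
    0 ≤ L (q * q) ∧ ∀ c, 0 ≤ L (boxPoly u δ c * (q * q))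

/-- The (closed) truncated quadratic module of the box. -/
def QQ {n : ℕ} (u : Fin n → ℝ) (δ : ℝ) (D : ℕ) (f : MvPolynomial (Fin n) ℝ) : Prop :=
  ∀ L, PosF u δ D L → 0 ≤ L f

/-- substitution `z ↦ v + t (z - v)` -/
def seg {n : ℕ} (v : Fin n → ℝ) (t : ℝ) : MvPolynomial (Fin n) ℝ →ₐ[ℝ] MvPolynomial (Fin n) ℝ :=
  aeval fun i => C (v i) + C t * (X i - C (v i))

lemma totalDegree_aeval_le {n : ℕ} (f : Fin n → MvPolynomial (Fin n) ℝ)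
    (hf : ∀ i, (f i).totalDegree ≤ 1) (q : MvPolynomial (Fin n) ℝ) :
    (aeval f q).totalDegree ≤ q.totalDegree := by
  rw [aeval_def, eval₂_eq]
  refine totalDegree_finsetSum_le fun d hd => ?_
  refine (totalDegree_mul _ _).trans ?_
  rw [algebraMap_eq, totalDegree_C, zero_add]
  refine (totalDegree_finsetProd _ _).trans ?_
  refine le_trans ?_ (le_totalDegree hd)
  refine Finset.sum_le_sum fun i _ => ?_
  refine (totalDegree_pow _ _).trans ?_
  nlinarith [hf i]

lemma totalDegree_lin {n : ℕ} (r : ℝ) (i : Fin n) :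
    (X i - C r : MvPolynomial (Fin n) ℝ).totalDegree ≤ 1 := by
  refine (totalDegree_sub _ _).trans ?_
  simp

lemma totalDegree_seg_le {n : ℕ} (v : Fin n → ℝ) (t : ℝ) (q : MvPolynomial (Fin n) ℝ) :
    (seg v t q).totalDegree ≤ q.totalDegree := by
  refine totalDegree_aeval_le _ (fun i => ?_) q
  refine (totalDegree_add _ _).trans ?_
  refine max_le (by simp) ((totalDegree_mul _ _).trans ?_)
  have := totalDegree_lin (v i) i
  simpa using this

lemma PosF.mono {n : ℕ} {u : Fin n → ℝ} {δ : ℝ} {D D' : ℕ} (h : D ≤ D')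
    {L : MvPolynomial (Fin n) ℝ →ₗ[ℝ] ℝ} (hL : PosF u δ D' L) : PosF u δ D L :=
  fun q hq => hL q (hq.trans h)

lemma PosF.one {n : ℕ} {u : Fin n → ℝ} {δ : ℝ} {D : ℕ}
    {L : MvPolynomial (Fin n) ℝ →ₗ[ℝ] ℝ} (hL : PosF u δ D L) : 0 ≤ L 1 := by
  simpa using (hL 1 (by simp)).1

lemma PosF.sqMul {n : ℕ} {u : Fin n → ℝ} {δ : ℝ} {D e : ℕ}
    {L : MvPolynomial (Fin n) ℝ →ₗ[ℝ] ℝ} (hL : PosF u δ (D + e) L)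
    (s : MvPolynomial (Fin n) ℝ) (hs : s.totalDegree ≤ e) :
    PosF u δ D (L.comp (LinearMap.mulLeft ℝ (s * s))) := by
  intro q hq
  have hd : (s * q).totalDegree ≤ D + e := (totalDegree_mul _ _).trans (by omega)
  obtain ⟨h1, h2⟩ := hL (s * q) hd
  refine ⟨?_, fun c => ?_⟩
  · simp only [LinearMap.comp_apply, LinearMap.mulLeft_apply]
    convert h1 using 2; ring
  · simp only [LinearMap.comp_apply, LinearMap.mulLeft_apply]
    convert h2 c using 2; ring

lemma map_C_mul' {n : ℕ} (L : MvPolynomial (Fin n) ℝ →ₗ[ℝ] ℝ) (r : ℝ)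
    (f : MvPolynomial (Fin n) ℝ) : L (C r * f) = r * L f := by
  rw [C_mul', map_smul, smul_eq_mul]

lemma PosF.seg {n : ℕ} {u : Fin n → ℝ} {δ : ℝ} {D : ℕ}
    {L : MvPolynomial (Fin n) ℝ →ₗ[ℝ] ℝ} (hL : PosF u δ (D + 1) L)
    (v : Fin n → ℝ) (hv : ∀ c, (v c - u c) ^ 2 ≤ δ ^ 2) (t : ℝ) (ht : t ∈ Set.Icc (0 : ℝ) 1) :
    PosF u δ D (L.comp (seg v t).toLinearMap) := by
  intro q hq
  have hd := (totalDegree_seg_le v t q).trans hq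
  obtain ⟨h1, h2⟩ := hL (_root_.seg v t q) (by omega)
  refine ⟨?_, fun c => ?_⟩
  · simpa using h1
  · have h3 := (hL ((X c - C (v c)) * _root_.seg v t q)
      ((totalDegree_mul _ _).trans (by have := totalDegree_lin (v c) c; omega))).1
    have key : _root_.seg v t (boxPoly u δ c * (q * q))
        = C ((1 - t) * (δ ^ 2 - (v c - u c) ^ 2)) * (_root_.seg v t q * _root_.seg v t q)
          + C t * (boxPoly u δ c * (_root_.seg v t q * _root_.seg v t q))
          + C (t * (1 - t)) * (((X c - C (v c)) * _root_.seg v t q) *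
            ((X c - C (v c)) * _root_.seg v t q)) := by
      rw [map_mul, map_mul]
      have : _root_.seg v t (boxPoly u δ c)
        = C (δ ^ 2) - (C (v c) + C t * (X c - C (v c)) - C (u c)) ^ 2 := by
        simp [_root_.seg, boxPoly, algebraMap_eq]
      rw [this]
      simp only [boxPoly, map_mul, map_sub, map_pow, map_one]
      ring
    simp only [LinearMap.comp_apply, AlgHom.toLinearMap_apply]
    rw [key, map_add, map_add, map_C_mul', map_C_mul', map_C_mul']
    have ht0 := ht.1
    have ht1 : 0 ≤ 1 - t := by linarith [ht.2]
    have hv' : 0 ≤ δ ^ 2 - (v c - u c) ^ 2 := by linarith [hv c]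
    have := h2 c
    positivity

lemma QQ.mono {n : ℕ} {u : Fin n → ℝ} {δ : ℝ} {D D' : ℕ} {f : MvPolynomial (Fin n) ℝ}
    (hf : QQ u δ D f) (h : D ≤ D') : QQ u δ D' f := fun L hL => hf L (hL.mono h)

lemma QQ.add {n : ℕ} {u : Fin n → ℝ} {δ : ℝ} {D : ℕ} {f g : MvPolynomial (Fin n) ℝ}
    (hf : QQ u δ D f) (hg : QQ u δ D g) : QQ u δ D (f + g) := fun L hL => by
  rw [map_add]; exact add_nonneg (hf L hL) (hg L hL)

lemma QQ.smul {n : ℕ} {u : Fin n → ℝ} {δ : ℝ} {D : ℕ} {f : MvPolynomial (Fin n) ℝ} {r : ℝ}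
    (hr : 0 ≤ r) (hf : QQ u δ D f) : QQ u δ D (C r * f) := fun L hL => by
  rw [map_C_mul']; exact mul_nonneg hr (hf L hL)

lemma QQ.sqMul {n : ℕ} {u : Fin n → ℝ} {δ : ℝ} {D e : ℕ} {f : MvPolynomial (Fin n) ℝ}
    (hf : QQ u δ D f) (s : MvPolynomial (Fin n) ℝ) (hs : s.totalDegree ≤ e) :
    QQ u δ (D + e) (s * s * f) := fun L hL => hf _ (hL.sqMul s hs)

lemma QQ.sq {n : ℕ} {u : Fin n → ℝ} {δ : ℝ} {D : ℕ} (s : MvPolynomial (Fin n) ℝ)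
    (hs : s.totalDegree ≤ D) : QQ u δ D (s * s) := fun L hL => (hL s hs).1

lemma QQ.one {n : ℕ} {u : Fin n → ℝ} {δ : ℝ} {D : ℕ} : QQ u δ D 1 := fun L hL => hL.one

lemma QQ.box {n : ℕ} {u : Fin n → ℝ} {δ : ℝ} {D : ℕ} (c : Fin n) : QQ u δ D (boxPoly u δ c) :=
  fun L hL => by simpa using (hL 1 (by simp)).2 c

/-- polynomials vanishing at the centre are `O(δ)` on the box of radius `δ`, with certificates -/
lemma exists_bound {n : ℕ} (u : Fin n → ℝ) (r : MvPolynomial (Fin n) ℝ) :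
    ∃ B : ℝ, 0 ≤ B ∧ ∃ D : ℕ, ∀ δ : ℝ, 0 < δ → δ ≤ 1 →
      QQ u δ D (C (B * δ ^ 2) - (r - C (eval u r)) * (r - C (eval u r))) := by
  induction r using MvPolynomial.induction_on with
  | C a =>
    refine ⟨0, le_rfl, 0, fun δ _ _ L hL => ?_⟩
    simp
  | add p q hp hq =>
    obtain ⟨B1, hB1, D1, h1⟩ := hp
    obtain ⟨B2, hB2, D2, h2⟩ := hq
    set s1 := p - C (eval u p)
    set s2 := q - C (eval u q)
    refine ⟨2 * B1 + 2 * B2, by positivity, max (max D1 D2) (s1 - s2).totalDegree,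
      fun δ h0 h1' => ?_⟩
    have e1 := ((h1 δ h0 h1').mono (D' := max (max D1 D2) (s1 - s2).totalDegree)
      (by simp)).smul (r := 2) (by norm_num)
    have e2 := ((h2 δ h0 h1').mono (D' := max (max D1 D2) (s1 - s2).totalDegree)
      (by simp)).smul (r := 2) (by norm_num)
    have e3 := QQ.sq (u := u) (δ := δ) (D := max (max D1 D2) (s1 - s2).totalDegree) (s1 - s2)
      (by simp)
    convert (e1.add e2).add e3 using 1
    have hs : p + q - C (eval u (p + q)) = s1 + s2 := by
      simp only [s1, s2, map_add]; ring
    rw [hs]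
    have h22 : (C 2 : MvPolynomial (Fin n) ℝ) = 2 := rfl
    simp only [map_mul, map_add, map_pow, h22]
    ring
  | mul_X p j hp =>
    obtain ⟨B, hB, D, h⟩ := hp
    set r0 := eval u p with hr0
    set s := p - C r0 with hs
    set y : MvPolynomial (Fin n) ℝ := X j - C (u j) with hy
    set z := s * X j - C r0 * y with hz
    set D' := max (max D (1 + s.totalDegree)) z.totalDegree with hD'
    have hDD : D ≤ D' := by simp [hD']
    have hDs : 1 + s.totalDegree ≤ D' := by simp [hD']
    have hDz : z.totalDegree ≤ D' := by simp [hD']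
    refine ⟨2 * (2 + 2 * u j ^ 2) * B + 2 * r0 ^ 2, by positivity, D', fun δ h0 h1' => ?_⟩
    have e1 := ((h δ h0 h1').mono hDD).smul (r := 2 * (2 + 2 * u j ^ 2)) (by positivity)
    have e2 : QQ u δ 1 (C (2 + 2 * u j ^ 2) - X j * X j) := by
      have f1 := (QQ.box (u := u) (δ := δ) (D := 1) j).smul (r := 2) (by norm_num)
      have f2 := (QQ.one (u := u) (δ := δ) (D := 1)).smul (r := 2 * (1 - δ ^ 2)) (by nlinarith)
      have f3 := QQ.sq (u := u) (δ := δ) (D := 1) (X j - C (2 * u j)) (totalDegree_lin _ _)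
      convert (f1.add f2).add f3 using 1
      have h22 : (C 2 : MvPolynomial (Fin n) ℝ) = 2 := rfl
      simp only [boxPoly, map_mul, map_add, map_pow, map_sub, map_one, h22]
      ring
    have e3 := ((e2.sqMul s le_rfl).mono hDs).smul (r := 2) (by norm_num)
    have e4 := (QQ.box (u := u) (δ := δ) (D := D') j).smul (r := 2 * r0 ^ 2) (by positivity)
    have e5 := QQ.sq (u := u) (δ := δ) (D := D') z hDz
    convert ((e1.add e3).add e4).add e5 using 1
    have hs : p * X j - C (eval u (p * X j)) = s * X j + C r0 * y := by
      simp only [hs, hy, map_mul, eval_X, hr0]; ring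
    rw [hs, hz]
    have h22 : (C 2 : MvPolynomial (Fin n) ℝ) = 2 := rfl
    simp only [boxPoly, map_mul, map_add, map_pow, h22, hy]
    ring

/-- first derivative along the segment -/
lemma hasDerivAt_seg {n : ℕ} (v : Fin n → ℝ) (p : MvPolynomial (Fin n) ℝ) :
    ∀ (L : MvPolynomial (Fin n) ℝ →ₗ[ℝ] ℝ) (t : ℝ),
      HasDerivAt (fun t => L (seg v t p))
        (∑ i, L ((X i - C (v i)) * seg v t (pderiv i p))) t := by
  induction p using MvPolynomial.induction_on with
  | C a =>
    intro L t
    have : ∀ t, seg v t (C a : MvPolynomial (Fin n) ℝ) = C a := fun t => by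
      simp [seg, algebraMap_eq]
    simp only [this, pderiv_C, map_zero, mul_zero, Finset.sum_const_zero]
    exact hasDerivAt_const _ _
  | add p q hp hq =>
    intro L t
    have := (hp L t).add (hq L t)
    simp only [map_add, mul_add, Finset.sum_add_distrib]
    exact this
  | mul_X p j hp =>
    intro L t
    have hX : ∀ t, seg v t (X j : MvPolynomial (Fin n) ℝ) = C (v j) + C t * (X j - C (v j)) :=
      fun t => by simp [seg]
    set a : MvPolynomial (Fin n) ℝ := X j - C (v j) with ha
    have h1 := ((hp L t).const_mul (v j)).add
      ((hasDerivAt_id t).mul (hp (L.comp (LinearMap.mulLeft ℝ a)) t))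
    have hfun : (fun t => L (seg v t (p * X j))) =
        (fun t => v j * L (seg v t p)) + id * fun t =>
          (L.comp (LinearMap.mulLeft ℝ a)) (seg v t p) := by
      funext t
      simp only [Pi.add_apply, Pi.mul_apply, id, LinearMap.comp_apply, LinearMap.mulLeft_apply]
      rw [← map_C_mul', ← map_C_mul', ← map_add, map_mul, hX]
      congr 1
      ring
    rw [hfun]
    refine h1.congr_deriv (Eq.symm ?_)
    have hder : ∀ i, (X i - C (v i)) * seg v t (pderiv i (p * X j))
        = C (v j) * ((X i - C (v i)) * seg v t (pderiv i p))
          + C t * (a * ((X i - C (v i)) * seg v t (pderiv i p)))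
          + (if i = j then a * seg v t p else 0) := by
      intro i
      rw [Derivation.leibniz, smul_eq_mul, smul_eq_mul, map_add, map_mul, map_mul, hX, pderiv_X]
      by_cases hij : i = j
      · subst hij
        simp only [Pi.single_eq_same, map_one, if_true, ← ha]
        ring
      · rw [if_neg hij, Pi.single_eq_of_ne (fun h => hij h.symm)]
        simp only [map_zero]
        ring
    simp only [hder, map_add, map_C_mul', Finset.sum_add_distrib, ← Finset.mul_sum,
      LinearMap.comp_apply, LinearMap.mulLeft_apply, id, apply_ite L, map_zero,
      Finset.sum_ite_eq', Finset.mem_univ, if_true]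
    ring

lemma seg_one {n : ℕ} (v : Fin n → ℝ) (p : MvPolynomial (Fin n) ℝ) : seg v 1 p = p := by
  have : (fun i => C (v i) + C 1 * (X i - C (v i)) : Fin n → MvPolynomial (Fin n) ℝ) = X := by
    funext i; simp
  rw [seg, this, aeval_X_left_apply]

lemma seg_zero {n : ℕ} (v : Fin n → ℝ) (p : MvPolynomial (Fin n) ℝ) :
    seg v 0 p = C (eval v p) := by
  induction p using MvPolynomial.induction_on with
  | C a => simp [seg, algebraMap_eq]
  | add p q hp hq => rw [map_add, hp, hq, map_add, map_add]
  | mul_X p j hp => rw [map_mul, hp]; simp [seg]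

/-- Jensen inequality for pseudo-expectations -/
lemma jensen {n : ℕ} (L : MvPolynomial (Fin n) ℝ →ₗ[ℝ] ℝ) (hL1 : L 1 = 1)
    (v : Fin n → ℝ) (hv : ∀ i, L (X i) = v i) (p : MvPolynomial (Fin n) ℝ)
    (h : ∀ t ∈ Set.Icc (0 : ℝ) 1, 0 ≤ ∑ i, ∑ j, L ((X i - C (v i)) * (X j - C (v j)) *
      seg v t (-(pderiv j (pderiv i p))))) : L p ≤ eval v p := by
  have hC : ∀ r : ℝ, L (C r) = r := fun r => by
    have := map_C_mul' L r 1; rwa [mul_one, hL1, mul_one] at this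
  have d1 := fun t => hasDerivAt_seg v p L t
  have d2 : ∀ t, HasDerivAt (fun t => ∑ i, L ((X i - C (v i)) * seg v t (pderiv i p)))
      (∑ i, ∑ j, L ((X i - C (v i)) * ((X j - C (v j)) * seg v t (pderiv j (pderiv i p))))) t := by
    intro t
    refine HasDerivAt.fun_sum fun i _ => ?_
    exact hasDerivAt_seg v (pderiv i p) (L.comp (LinearMap.mulLeft ℝ (X i - C (v i)))) t
  have n2 : ∀ t ∈ Set.Icc (0 : ℝ) 1,
      (∑ i, ∑ j, L ((X i - C (v i)) * ((X j - C (v j)) * seg v t (pderiv j (pderiv i p))))) ≤ 0 := by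
    intro t ht
    have := h t ht
    simp only [map_neg, mul_neg, Finset.sum_neg_distrib, mul_assoc] at this
    linarith
  have hin : interior (Set.Icc (0 : ℝ) 1) ⊆ Set.Icc 0 1 := interior_subset
  have a2 : AntitoneOn (fun t => ∑ i, L ((X i - C (v i)) * seg v t (pderiv i p)))
      (Set.Icc (0 : ℝ) 1) := by
    refine antitoneOn_of_deriv_nonpos (convex_Icc 0 1)
      (fun t _ => (d2 t).continuousAt.continuousWithinAt)
      (fun t _ => (d2 t).differentiableAt.differentiableWithinAt) (fun t ht => ?_)
    rw [(d2 t).deriv]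
    exact n2 t (hin ht)
  have z : ∑ i, L ((X i - C (v i)) * seg v 0 (pderiv i p)) = 0 := by
    refine Finset.sum_eq_zero fun i _ => ?_
    rw [seg_zero, mul_comm, map_C_mul', map_sub, hC, hv]
    ring
  have a1 : AntitoneOn (fun t => L (seg v t p)) (Set.Icc (0 : ℝ) 1) := by
    refine antitoneOn_of_deriv_nonpos (convex_Icc 0 1)
      (fun t _ => (d1 t).continuousAt.continuousWithinAt)
      (fun t _ => (d1 t).differentiableAt.differentiableWithinAt) (fun t ht => ?_)
    rw [(d1 t).deriv, ← z]
    exact a2 (by simp) (hin ht) (hin ht).1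
  have := a1 (a := 0) (b := 1) (by simp) (by simp) zero_le_one
  simp only [seg_one, seg_zero, hC] at this
  exact this

lemma seg_expand {n : ℕ} (L : MvPolynomial (Fin n) ℝ →ₗ[ℝ] ℝ) (v : Fin n → ℝ) (t r : ℝ)
    (a E : MvPolynomial (Fin n) ℝ) :
    ((L.comp (LinearMap.mulLeft ℝ (a * a))).comp (seg v t).toLinearMap) (C r - E * E)
      = r * L (a * a) - L (a * a * (seg v t E * seg v t E)) := by
  have h : seg v t (C r) = C r := by rw [← algebraMap_eq, AlgHom.commutes]
  simp only [LinearMap.comp_apply, AlgHom.toLinearMap_apply, LinearMap.mulLeft_apply]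
  rw [map_sub, h, map_mul (seg v t), mul_sub, map_sub, mul_comm (a * a) (C r), map_C_mul']

open scoped MatrixOrder ComplexOrder in
lemma trace_nonneg {n : ℕ} (G A : Fin n → Fin n → ℝ) (hs : ∀ i j, G i j = G j i)
    (hG : ∀ x : Fin n → ℝ, 0 ≤ ∑ i, ∑ j, x i * G i j * x j)
    (hA : ∀ x : Fin n → ℝ, 0 ≤ ∑ i, ∑ j, x i * A i j * x j) :
    0 ≤ ∑ i, ∑ j, G i j * A i j := by
  have hP : (Matrix.of G).PosSemidef := by
    refine Matrix.PosSemidef.of_dotProduct_mulVec_nonneg ?_ ?_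
    · ext i j; simp [hs i j]
    · intro x
      have := hG x
      simp only [dotProduct, Matrix.mulVec, Pi.star_apply, star_trivial, Matrix.of_apply,
        Finset.mul_sum, ← mul_assoc]
      exact this
  obtain ⟨B, hB⟩ := CStarAlgebra.nonneg_iff_eq_star_mul_self.mp hP.nonneg
  have hG' : ∀ i j, G i j = ∑ l, B l i * B l j := by
    intro i j
    have := congrFun (congrFun hB i) j
    simpa [Matrix.mul_apply, Matrix.star_apply] using this
  have : ∑ i, ∑ j, G i j * A i j = ∑ l, ∑ i, ∑ j, B l i * A i j * B l j := by
    simp only [hG', Finset.sum_mul]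
    rw [Finset.sum_congr rfl fun j _ => Finset.sum_comm]
    rw [Finset.sum_comm]
    refine Finset.sum_congr rfl fun l _ => ?_
    refine Finset.sum_congr rfl fun i _ => Finset.sum_congr rfl fun j _ => by ring
  rw [this]
  exact Finset.sum_nonneg fun l _ => hA _

lemma strict_nonneg {n : ℕ} (u : Fin n → ℝ) (H : Fin n → Fin n → MvPolynomial (Fin n) ℝ)
    (lam : ℝ) (hlam : 0 < lam)
    (hH : ∀ x : Fin n → ℝ, lam * ∑ i, x i ^ 2 ≤ ∑ i, ∑ j, x i * eval u (H i j) * x j) :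
    ∃ δ0 : ℝ, 0 < δ0 ∧ ∃ D : ℕ, ∀ δ : ℝ, 0 < δ → δ ≤ δ0 → ∀ L, PosF u δ D L →
      ∀ v : Fin n → ℝ, (∀ c, (v c - u c) ^ 2 ≤ δ ^ 2) → ∀ t ∈ Set.Icc (0 : ℝ) 1,
      0 ≤ ∑ i, ∑ j, L ((X i - C (v i)) * (X j - C (v j)) * seg v t (H i j)) := by
  choose B hB0 D hBD using fun i j => exists_bound u (H i j)
  set b : ℝ := 1 + ∑ i, ∑ j, B i j with hb
  have hb1 : 1 ≤ b := by
    have : 0 ≤ ∑ i, ∑ j, B i j := Finset.sum_nonneg fun i _ => Finset.sum_nonneg fun j _ => hB0 i j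
    linarith
  have hBb : ∀ i j, B i j ≤ b := by
    intro i j
    have h1 : B i j ≤ ∑ j, B i j :=
      Finset.single_le_sum (f := fun j => B i j) (fun j _ => hB0 i j) (Finset.mem_univ j)
    have h2 : ∑ j, B i j ≤ ∑ i, ∑ j, B i j :=
      Finset.single_le_sum (f := fun i => ∑ j, B i j)
        (fun i _ => Finset.sum_nonneg fun j _ => hB0 i j) (Finset.mem_univ i)
    linarith
  set E : Fin n → Fin n → MvPolynomial (Fin n) ℝ := fun i j => H i j - C (eval u (H i j)) with hE
  set DD : ℕ := ∑ i, ∑ j, (D i j + 2 + (E i j).totalDegree) + 2 with hDD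
  have hDle : ∀ i j, D i j + 2 + (E i j).totalDegree ≤ DD := by
    intro i j
    have h1 : D i j + 2 + (E i j).totalDegree ≤ ∑ j, (D i j + 2 + (E i j).totalDegree) :=
      Finset.single_le_sum (f := fun j => D i j + 2 + (E i j).totalDegree)
        (fun j _ => Nat.zero_le _) (Finset.mem_univ j)
    have h2 : ∑ j, (D i j + 2 + (E i j).totalDegree)
        ≤ ∑ i, ∑ j, (D i j + 2 + (E i j).totalDegree) :=
      Finset.single_le_sum (f := fun i => ∑ j, (D i j + 2 + (E i j).totalDegree))
        (fun i _ => Nat.zero_le _) (Finset.mem_univ i)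
    omega
  have hn : (0 : ℝ) < n + 1 := by positivity
  refine ⟨min 1 (lam / (b * (n + 1))), lt_min one_pos (by positivity), DD, ?_⟩
  intro δ hδ hδ0 L hL v hv t ht
  have hδ1 : δ ≤ 1 := hδ0.trans (min_le_left _ _)
  have hδ2 : δ * (b * (n + 1)) ≤ lam := by
    have := hδ0.trans (min_le_right _ _)
    rwa [le_div_iff₀ (by positivity)] at this
  set η : ℝ := b * δ with hη
  have hη0 : 0 < η := by positivity
  set a : Fin n → MvPolynomial (Fin n) ℝ := fun i => X i - C (v i) with ha
  have hadeg : ∀ i, (a i).totalDegree ≤ 1 := fun i => totalDegree_lin (v i) i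
  set G : Fin n → Fin n → ℝ := fun i j => L (a i * a j) with hG
  have hGii : ∀ i, 0 ≤ G i i := fun i => (hL (a i) ((hadeg i).trans (by omega))).1
  have hoff : ∀ i j, -(η / 2 * (G i i + G j j)) ≤ L (a i * a j * seg v t (E i j)) := by
    intro i j
    have hd := hDle i j
    have hsd := totalDegree_seg_le v t (E i j)
    have h1 := (hL (C η * a i + a j * seg v t (E i j)) (by
      refine (totalDegree_add _ _).trans (max_le ((totalDegree_mul _ _).trans ?_)
        ((totalDegree_mul _ _).trans ?_))
      · have := hadeg i; rw [totalDegree_C]; omega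
      · have := hadeg j; omega)).1
    have hL2 : PosF u δ (D i j + 1 + 1) L := hL.mono (by omega)
    have h2 := hBD i j δ hδ hδ1 _ (((hL2.sqMul (a j) (hadeg j)).seg v hv t ht))
    have h3 : 0 ≤ B i j * δ ^ 2 * G j j - L (a j * a j * (seg v t (E i j) * seg v t (E i j))) := by
      convert h2 using 1
      exact (seg_expand L v t (B i j * δ ^ 2) (a j) (E i j)).symm
    have h4 : B i j * δ ^ 2 * G j j ≤ η ^ 2 * G j j := by
      refine mul_le_mul_of_nonneg_right ?_ (hGii j)
      rw [hη, mul_pow]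
      refine mul_le_mul_of_nonneg_right ?_ (by positivity)
      nlinarith [hBb i j]
    have h5 : L ((C η * a i + a j * seg v t (E i j)) * (C η * a i + a j * seg v t (E i j)))
        = η ^ 2 * G i i + 2 * η * L (a i * a j * seg v t (E i j))
          + L (a j * a j * (seg v t (E i j) * seg v t (E i j))) := by
      have : (C η * a i + a j * seg v t (E i j)) * (C η * a i + a j * seg v t (E i j))
          = C (η ^ 2) * (a i * a i) + C (2 * η) * (a i * a j * seg v t (E i j))
            + (a j * a j * (seg v t (E i j) * seg v t (E i j))) := by
        have h22 : (C 2 : MvPolynomial (Fin n) ℝ) = 2 := rfl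
        simp only [map_mul, map_pow, h22]
        ring
      rw [this, map_add, map_add, map_C_mul', map_C_mul']
    have h6 : 0 ≤ (2 * η) * (L (a i * a j * seg v t (E i j)) + η / 2 * (G i i + G j j)) := by
      nlinarith
    have := nonneg_of_mul_nonneg_right h6 (by positivity)
    linarith
  have hsplit : ∀ i j, L (a i * a j * seg v t (H i j))
      = G i j * eval u (H i j) + L (a i * a j * seg v t (E i j)) := by
    intro i j
    have : seg v t (H i j) = C (eval u (H i j)) + seg v t (E i j) := by
      simp only [hE, map_sub]
      rw [← algebraMap_eq, AlgHom.commutes]; ring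
    rw [this, mul_add, map_add, mul_comm _ (C _), map_C_mul', mul_comm]
  have htr : 0 ≤ ∑ i, ∑ j, G i j * (eval u (H i j) - if i = j then lam else 0) := by
    refine trace_nonneg G _ (fun i j => by simp only [hG, mul_comm]) ?_ ?_
    · intro x
      have h1 := (hL (∑ i, C (x i) * a i) (totalDegree_finsetSum_le fun i _ =>
        (totalDegree_mul _ _).trans (by rw [totalDegree_C]; have := hadeg i; omega))).1
      convert h1 using 1
      rw [Finset.sum_mul_sum, map_sum]
      refine Finset.sum_congr rfl fun i _ => ?_
      rw [map_sum]
      refine Finset.sum_congr rfl fun j _ => ?_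
      rw [show C (x i) * a i * (C (x j) * a j) = C (x i * x j) * (a i * a j) by
        rw [map_mul]; ring, map_C_mul']
      simp only [hG]; ring
    · intro x
      have h1 := hH x
      have : ∑ i, ∑ j, x i * (eval u (H i j) - if i = j then lam else 0) * x j
          = ∑ i, ∑ j, x i * eval u (H i j) * x j - lam * ∑ i, x i ^ 2 := by
        simp only [mul_sub, sub_mul, Finset.sum_sub_distrib, Finset.mul_sum]
        congr 1
        refine Finset.sum_congr rfl fun i _ => ?_
        simp; ring
      rw [this]; linarith
  have htr2 : ∑ i, ∑ j, G i j * (eval u (H i j) - if i = j then lam else 0)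
      = ∑ i, ∑ j, G i j * eval u (H i j) - lam * ∑ i, G i i := by
    simp only [mul_sub, Finset.sum_sub_distrib, Finset.mul_sum]
    congr 1
    refine Finset.sum_congr rfl fun i _ => ?_
    simp; ring
  have hsumoff : ∑ i, ∑ j, -(η / 2 * (G i i + G j j)) = -(η * n * ∑ i, G i i) := by
    simp only [Finset.sum_neg_distrib, mul_add, Finset.sum_add_distrib, ← Finset.mul_sum,
      Finset.sum_const, Finset.card_univ, Fintype.card_fin, nsmul_eq_mul]
    ring
  have hle : ∑ i, ∑ j, -(η / 2 * (G i i + G j j)) ≤ ∑ i, ∑ j, L (a i * a j * seg v t (E i j)) :=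
    Finset.sum_le_sum fun i _ => Finset.sum_le_sum fun j _ => hoff i j
  have hT : 0 ≤ ∑ i, G i i := Finset.sum_nonneg fun i _ => hGii i
  have hfin : ∑ i, ∑ j, L (a i * a j * seg v t (H i j))
      = ∑ i, ∑ j, G i j * eval u (H i j) + ∑ i, ∑ j, L (a i * a j * seg v t (E i j)) := by
    simp only [hsplit, Finset.sum_add_distrib]
  rw [hfin]
  have hcoef : 0 ≤ lam - η * n := by
    have : 0 ≤ δ * b := by positivity
    rw [hη]; nlinarith
  nlinarith [mul_nonneg hcoef hT]

lemma sos_nonneg {n : ℕ} (g : MvPolynomial (Fin n) ℝ) (hg : SosConcave g) :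
    ∃ D : ℕ, ∀ (u : Fin n → ℝ) (δ : ℝ), ∀ L, PosF u δ D L →
      ∀ v : Fin n → ℝ, ∀ t : ℝ,
      0 ≤ ∑ i, ∑ j, L ((X i - C (v i)) * (X j - C (v j)) *
        seg v t (-(pderiv j (pderiv i g)))) := by
  obtain ⟨k, W, hW⟩ := hg
  refine ⟨∑ l, ∑ i, (W l i).totalDegree + 1, fun u δ L hL v t => ?_⟩
  have key : ∑ i, ∑ j, L ((X i - C (v i)) * (X j - C (v j)) *
        seg v t (-(pderiv j (pderiv i g))))
      = ∑ l, L ((∑ i, (X i - C (v i)) * seg v t (W l i)) *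
          (∑ i, (X i - C (v i)) * seg v t (W l i))) := by
    simp only [hW, Finset.sum_mul_sum, map_sum, map_mul]
    simp only [Finset.mul_sum, map_sum]
    rw [Finset.sum_congr rfl fun i _ => Finset.sum_comm]
    rw [Finset.sum_comm]
    refine Finset.sum_congr rfl fun l _ => Finset.sum_congr rfl fun i _ =>
      Finset.sum_congr rfl fun j _ => ?_
    congr 1; ring
  rw [key]
  refine Finset.sum_nonneg fun l _ => (hL _ ?_).1
  refine totalDegree_finsetSum_le fun i _ => (totalDegree_mul _ _).trans ?_
  have h1 := totalDegree_lin (v i) i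
  have h2 := totalDegree_seg_le v t (W l i)
  have h3 : (W l i).totalDegree ≤ ∑ i, (W l i).totalDegree :=
    Finset.single_le_sum (f := fun i => (W l i).totalDegree) (fun _ _ => Nat.zero_le _)
      (Finset.mem_univ i)
  have h4 : ∑ i, (W l i).totalDegree ≤ ∑ l, ∑ i, (W l i).totalDegree :=
    Finset.single_le_sum (f := fun l => ∑ i, (W l i).totalDegree) (fun _ _ => Nat.zero_le _)
      (Finset.mem_univ l)
  omega

lemma PosF.mem_box {n : ℕ} {u : Fin n → ℝ} {δ : ℝ} {D : ℕ} (hD : 1 ≤ D)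
    {L : MvPolynomial (Fin n) ℝ →ₗ[ℝ] ℝ} (hL : PosF u δ D L) (h1 : L 1 = 1) (c : Fin n) :
    (L (X c) - u c) ^ 2 ≤ δ ^ 2 := by
  have e1 := (hL 1 (by simp)).2 c
  have e2 := (hL (X c - C (L (X c))) ((totalDegree_lin _ c).trans hD)).1
  have f1 : boxPoly u δ c * (1 * 1) = C (δ ^ 2 - (u c) ^ 2) * 1 + C (2 * u c) * X c
      - X c * X c := by
    have h22 : (C 2 : MvPolynomial (Fin n) ℝ) = 2 := rfl
    simp only [boxPoly, map_mul, map_sub, map_pow, h22]; ring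
  have f2 : (X c - C (L (X c))) * (X c - C (L (X c))) = X c * X c - C (2 * L (X c)) * X c
      + C (L (X c) ^ 2) * 1 := by
    have h22 : (C 2 : MvPolynomial (Fin n) ℝ) = 2 := rfl
    simp only [map_mul, map_pow, h22]; ring
  rw [f1, map_sub, map_add, map_C_mul', map_C_mul', h1] at e1
  rw [f2, map_add, map_sub, map_C_mul', map_C_mul', h1] at e2
  nlinarith

lemma finsler {n : ℕ} (Q : Fin n → Fin n → ℝ) (d : Fin n → ℝ)
    (h : ∀ v : Fin n → ℝ, v ≠ 0 → (∑ j, d j * v j) = 0 → 0 < ∑ i, ∑ j, v i * Q i j * v j) :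
    ∃ M : ℝ, 0 ≤ M ∧ ∃ lam : ℝ, 0 < lam ∧ ∀ v : Fin n → ℝ,
      lam * ∑ i, v i ^ 2 ≤ ∑ i, ∑ j, v i * Q i j * v j + M * (∑ j, d j * v j) ^ 2 := by
  set q : (Fin n → ℝ) → ℝ := fun v => ∑ i, ∑ j, v i * Q i j * v j with hq
  set l : (Fin n → ℝ) → ℝ := fun v => (∑ j, d j * v j) ^ 2 with hl
  have hqc : Continuous q := by fun_prop
  have hlc : Continuous l := by fun_prop
  set Sp : Set (Fin n → ℝ) := sphere 0 1
  have hSp : IsCompact Sp := isCompact_sphere 0 1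
  have hne : ∀ v ∈ Sp, v ≠ 0 := by
    rintro v hv rfl
    simp [Sp] at hv
  have hK : IsCompact (Sp ∩ {v | q v ≤ 0}) := hSp.inter_right (isClosed_le hqc continuous_const)
  obtain ⟨M, hM0, hM⟩ : ∃ M : ℝ, 0 ≤ M ∧ ∀ v ∈ Sp, 0 < q v + M * l v := by
    obtain ⟨e, he, hle⟩ := hK.exists_forall_le' (f := l) (a := 0) hlc.continuousOn (by
      rintro v ⟨hv, hv2⟩
      refine lt_of_le_of_ne (sq_nonneg _) fun h0 => ?_
      have := h v (hne v hv) (pow_eq_zero_iff two_ne_zero |>.1 h0.symm)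
      exact absurd hv2 (not_le.2 this))
    obtain ⟨c, hc⟩ := hSp.bddBelow_image hqc.continuousOn
    refine ⟨(|c| + 1) / e, by positivity, fun v hv => ?_⟩
    by_cases hv2 : q v ≤ 0
    · have h1 := hle v ⟨hv, hv2⟩
      have h2 : c ≤ q v := hc ⟨v, hv, rfl⟩
      have h3 : |c| + 1 ≤ (|c| + 1) / e * l v := by
        rw [div_mul_eq_mul_div, le_div_iff₀ he]
        exact mul_le_mul_of_nonneg_left h1 (by positivity)
      have := neg_abs_le c
      linarith
    · have : 0 ≤ (|c| + 1) / e * l v := mul_nonneg (by positivity) (sq_nonneg _)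
      push Not at hv2
      linarith
  obtain ⟨mu, hmu, hmule⟩ := hSp.exists_forall_le' (f := fun v => q v + M * l v) (a := 0)
    (by fun_prop) hM
  refine ⟨M, hM0, mu / (n + 1), by positivity, fun v => ?_⟩
  change _ ≤ q v + M * l v
  have hcoord : ∑ i, v i ^ 2 ≤ (n + 1) * ‖v‖ ^ 2 := by
    have : ∑ i, v i ^ 2 ≤ ∑ i : Fin n, ‖v‖ ^ 2 := Finset.sum_le_sum fun i _ => by
      rw [← sq_abs]; exact pow_le_pow_left₀ (abs_nonneg _) (norm_le_pi_norm v i) 2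
    simp at this
    nlinarith [sq_nonneg ‖v‖]
  have hmain : mu * ‖v‖ ^ 2 ≤ q v + M * l v := by
    by_cases hv : v = 0
    · subst hv; simp [hq, hl]
    have hnv : 0 < ‖v‖ := norm_pos_iff.2 hv
    have h1 := hmule (‖v‖⁻¹ • v) (by simp [Sp, norm_smul, hnv.ne'])
    have h2 : q (‖v‖⁻¹ • v) = ‖v‖⁻¹ ^ 2 * q v := by
      simp only [hq, Finset.mul_sum, Pi.smul_apply, smul_eq_mul]
      refine Finset.sum_congr rfl fun i _ => Finset.sum_congr rfl fun j _ => by ring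
    have h3 : l (‖v‖⁻¹ • v) = ‖v‖⁻¹ ^ 2 * l v := by
      simp only [hl, Pi.smul_apply, smul_eq_mul]
      rw [← mul_pow, Finset.mul_sum]
      congr 1
      refine Finset.sum_congr rfl fun i _ => by ring
    simp only [h2, h3] at h1
    have h4 : mu ≤ (q v + M * l v) / ‖v‖ ^ 2 := by
      refine h1.trans (le_of_eq ?_)
      field_simp
    rwa [le_div_iff₀ (by positivity)] at h4
  refine le_trans ?_ hmain
  rw [div_mul_eq_mul_div, div_le_iff₀ (by positivity)]
  nlinarith
/-- the box around `u` -/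
def Box {n : ℕ} (u : Rn n) (δ : ℝ) : Set (Rn n) := {x | ∀ c, (x c - u c) ^ 2 ≤ δ ^ 2}

lemma continuous_peval {n : ℕ} (g : MvPolynomial (Fin n) ℝ) : Continuous (peval g) := by
  unfold peval
  exact (MvPolynomial.continuous_eval g).comp (by fun_prop)

lemma box_subset {n : ℕ} (u : Rn n) {U : Set (Rn n)} (hU : IsOpen U) (hu : u ∈ U) :
    ∃ δ0 : ℝ, 0 < δ0 ∧ ∀ δ, 0 < δ → δ ≤ δ0 → Box u δ ⊆ U := by
  obtain ⟨ε, hε, hεU⟩ := Metric.isOpen_iff.1 hU u hu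
  refine ⟨ε / (n + 1), by positivity, fun δ hδ hδ0 x hx => hεU ?_⟩
  rw [Metric.mem_ball, EuclideanSpace.dist_eq, Real.sqrt_lt' hε]
  have h1 : ∑ i, dist (x i) (u i) ^ 2 ≤ ∑ i : Fin n, δ ^ 2 := Finset.sum_le_sum fun i _ => by
    rw [Real.dist_eq, sq_abs]; exact hx i
  simp only [Finset.sum_const, Finset.card_univ, Fintype.card_fin, nsmul_eq_mul] at h1
  rw [le_div_iff₀ (by positivity)] at hδ0
  have h2 : (δ * (n + 1)) ^ 2 ≤ ε ^ 2 := pow_le_pow_left₀ (by positivity) hδ0 2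
  have h3 : (n : ℝ) * δ ^ 2 < (δ * (n + 1)) ^ 2 := by
    have : 0 < δ ^ 2 := by positivity
    have hn : (0 : ℝ) ≤ n := by positivity
    nlinarith [mul_nonneg hn this.le, mul_nonneg (mul_nonneg hn hn) this.le]
  linarith

/-- what we need locally around `u` -/
def LocalGood {n : ℕ} (u : Rn n) (g : MvPolynomial (Fin n) ℝ) (δ0 : ℝ) (D : ℕ)
    (p : MvPolynomial (Fin n) ℝ) : Prop :=
  ∀ δ, 0 < δ → δ ≤ δ0 → (∀ x ∈ Box u δ, 0 ≤ peval p x ↔ 0 ≤ peval g x) ∧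
    ∀ L, PosF (fun i => u i) δ D L → L 1 = 1 → L p ≤ eval (fun i => L (X i)) p

lemma local_pos {n : ℕ} (u : Rn n) (g : MvPolynomial (Fin n) ℝ) (h : 0 < peval g u) :
    ∃ δ0 : ℝ, 0 < δ0 ∧ ∃ D p, LocalGood u g δ0 D p := by
  obtain ⟨δ0, h0, hb⟩ := box_subset u (isOpen_lt continuous_const (continuous_peval g)) h
  refine ⟨δ0, h0, 0, 0, fun δ hδ hδ0 => ⟨fun x hx => ?_, fun L _ _ => by simp⟩⟩
  have : 0 < peval g x := hb δ hδ hδ0 hx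
  simp [peval] at this ⊢
  exact this.le

lemma local_sos {n : ℕ} (u : Rn n) (g : MvPolynomial (Fin n) ℝ) (h : SosConcave g) :
    ∃ δ0 : ℝ, 0 < δ0 ∧ ∃ D p, LocalGood u g δ0 D p := by
  obtain ⟨D, hD⟩ := sos_nonneg g h
  refine ⟨1, one_pos, D, g, fun δ hδ hδ0 => ⟨fun x hx => Iff.rfl, fun L hL hL1 => ?_⟩⟩
  exact jensen L hL1 _ (fun _ => rfl) g fun t ht => hD _ δ L hL _ t

lemma local_strict {n : ℕ} (u : Rn n) (g : MvPolynomial (Fin n) ℝ) (hgu : peval g u = 0)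
    (h : ∀ v : Fin n → ℝ, v ≠ 0 → (∑ j, pgrad g u j * v j) = 0 →
        0 < -(∑ j, ∑ j', v j * phess g u j j' * v j')) :
    ∃ δ0 : ℝ, 0 < δ0 ∧ ∃ D p, LocalGood u g δ0 D p := by
  obtain ⟨M, hM, lam, hlam, hF⟩ := finsler (fun i j => -phess g u i j) (pgrad g u) (by
    intro v hv hv0
    have := h v hv hv0
    simpa using this)
  set p : MvPolynomial (Fin n) ℝ := g - C (M / 2) * (g * g) with hp
  have hgu' : eval (fun i => u i) g = 0 := hgu
  have hess : ∀ i j, eval (fun k => u k) (-(pderiv j (pderiv i p)))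
      = -phess g u j i + M * (pgrad g u i * pgrad g u j) := by
    intro i j
    simp only [hp, map_sub, map_add, Derivation.leibniz, smul_eq_mul, pderiv_C, map_mul, map_neg,
      map_zero, eval_C, hgu', phess, pgrad, Matrix.of_apply, mul_zero, zero_mul, add_zero]
    ring
  have h2 : ∀ x, peval p x = (1 - M / 2 * peval g x) * peval g x := by
    intro x
    simp [peval, hp]; ring
  clear_value p
  have hq : ∀ x : Fin n → ℝ, lam * ∑ i, x i ^ 2 ≤
      ∑ i, ∑ j, x i * eval (fun k => u k) (-(pderiv j (pderiv i p))) * x j := by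
    intro x
    refine (hF x).trans (le_of_eq ?_)
    have e1 : ∑ i, ∑ j, x i * -phess g u i j * x j = ∑ i, ∑ j, x i * -phess g u j i * x j := by
      rw [Finset.sum_comm]
      exact Finset.sum_congr rfl fun i _ => Finset.sum_congr rfl fun j _ => by ring
    have e2 : M * (∑ j, pgrad g u j * x j) ^ 2
        = ∑ i, ∑ j, x i * (M * (pgrad g u i * pgrad g u j)) * x j := by
      rw [sq, Finset.sum_mul_sum, Finset.mul_sum]
      refine Finset.sum_congr rfl fun i _ => ?_
      rw [Finset.mul_sum]
      exact Finset.sum_congr rfl fun j _ => by ring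
    rw [e1, e2]
    simp only [hess, mul_add, add_mul, Finset.sum_add_distrib]
  obtain ⟨δ1, hδ1, D, hD⟩ := strict_nonneg (fun i => u i)
    (fun i j => -(pderiv j (pderiv i p))) lam hlam hq
  obtain ⟨δ2, hδ2, hb⟩ := box_subset u (U := {x | M / 2 * peval g x < 1})
    (isOpen_lt (continuous_const.mul (continuous_peval g)) continuous_const) (by
      change M / 2 * peval g u < 1
      rw [hgu]; norm_num)
  refine ⟨min δ1 δ2, lt_min hδ1 hδ2, D + 1, p, fun δ hδ hδ0 => ⟨fun x hx => ?_,
    fun L hL hL1 => ?_⟩⟩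
  · have h1 : M / 2 * peval g x < 1 := hb δ hδ (hδ0.trans (min_le_right _ _)) hx
    rw [h2]
    exact mul_nonneg_iff_of_pos_left (by linarith)
  · exact jensen L hL1 _ (fun _ => rfl) p fun t ht =>
      hD δ hδ (hδ0.trans (min_le_left _ _)) L (hL.mono (by omega)) _
        (fun c => hL.mem_box (by omega) hL1 c) t ht

lemma local_all {n m : ℕ} (u : Rn n) (g : Fin m → MvPolynomial (Fin n) ℝ)
    (h : ∀ i, ∃ δ0 : ℝ, 0 < δ0 ∧ ∃ D p, LocalGood u (g i) δ0 D p) :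
    ∃ δ : ℝ, 0 < δ ∧ ∃ (D : ℕ) (p : Fin m → MvPolynomial (Fin n) ℝ),
      (∀ x ∈ Box u δ, (∀ i, 0 ≤ peval (p i) x) ↔ ∀ i, 0 ≤ peval (g i) x) ∧
      ∀ i, ∀ L, PosF (fun i => u i) δ D L → L 1 = 1 →
        L (p i) ≤ eval (fun i => L (X i)) (p i) := by
  choose δ0 hδ0 D p hp using h
  obtain ⟨δ, hδ, hle⟩ : ∃ δ : ℝ, 0 < δ ∧ ∀ i, δ ≤ δ0 i := by
    obtain ⟨δ, h1, h2⟩ := (Set.finite_univ (α := Fin m)).isCompact.exists_forall_le'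
      (f := δ0) (a := 0) continuous_of_discreteTopology.continuousOn (fun i _ => hδ0 i)
    exact ⟨δ, h1, fun i => h2 i trivial⟩
  refine ⟨δ, hδ, ∑ i, D i, p, fun x hx => forall_congr' fun i => (hp i δ hδ (hle i)).1 x hx,
    fun i L hL hL1 => (hp i δ hδ (hle i)).2 L (hL.mono ?_) hL1⟩
  exact Finset.single_le_sum (f := D) (fun _ _ => Nat.zero_le _) (Finset.mem_univ i)

lemma PosF.zero_of_one {n : ℕ} {u : Fin n → ℝ} {δ : ℝ} {D : ℕ} (hD : 1 ≤ D)
    {L : MvPolynomial (Fin n) ℝ →ₗ[ℝ] ℝ} (hL : PosF u δ D L) (h1 : L 1 = 0) (c : Fin n) :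
    L (X c) = 0 := by
  have e : ∀ r : ℝ, 0 ≤ L (X c * X c) - 2 * r * L (X c) := by
    intro r
    have e2 := (hL (X c - C r) ((totalDegree_lin _ c).trans hD)).1
    have f2 : (X c - C r) * (X c - C r) = X c * X c - C (2 * r) * X c
        + C (r ^ 2) * (1 : MvPolynomial (Fin n) ℝ) := by
      have h22 : (C 2 : MvPolynomial (Fin n) ℝ) = 2 := rfl
      simp only [map_mul, map_pow, h22]; ring
    rw [f2, map_add, map_sub, map_C_mul', map_C_mul', h1] at e2
    linarith
  by_contra hne
  have := e ((L (X c * X c) + 1) / (2 * L (X c)))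
  have h3 : 2 * ((L (X c * X c) + 1) / (2 * L (X c))) * L (X c) = L (X c * X c) + 1 := by
    field_simp
  linarith

lemma eval_posF {n : ℕ} (x : Rn n) (u : Rn n) (δ : ℝ) (D : ℕ) (hx : x ∈ Box u δ) :
    PosF (fun i => u i) δ D (MvPolynomial.aeval (R := ℝ) (fun i => x i)).toLinearMap := by
  intro q _
  refine ⟨?_, fun c => ?_⟩
  · simpa using mul_self_nonneg _
  · have := hx c
    simp only [AlgHom.toLinearMap_apply, map_mul]
    refine mul_nonneg ?_ (mul_self_nonneg _)
    simp [boxPoly]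
    simpa using this
theorem main_aux {n m : ℕ}
    (g : Fin m → MvPolynomial (Fin n) ℝ) (S : Set (Rn n))
    (hS : S = {x : Rn n | ∀ i, 0 ≤ peval (g i) x})
    (hcpt : IsCompact S) (hconv : Convex ℝ S)
    (hloc : ∀ u ∈ S, ∀ i, ∃ δ0 : ℝ, 0 < δ0 ∧ ∃ D p, LocalGood u (g i) δ0 D p) :
    IsSDPRepresentable S := by
  classical
  have hloc' : ∀ u : S, ∃ δ : ℝ, 0 < δ ∧ ∃ (D : ℕ) (p : Fin m → MvPolynomial (Fin n) ℝ),
      (∀ x ∈ Box u.1 δ, (∀ i, 0 ≤ peval (p i) x) ↔ ∀ i, 0 ≤ peval (g i) x) ∧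
      ∀ i, ∀ L, PosF (fun i => u.1 i) δ D L → L 1 = 1 →
        L (p i) ≤ eval (fun i => L (X i)) (p i) :=
    fun u => local_all u.1 g (hloc u.1 u.2)
  choose δ hδ D p hp1 hp2 using hloc'
  obtain ⟨t, ht⟩ := hcpt.elim_finite_subcover (fun u : S => ball u.1 (δ u)) (fun u => isOpen_ball)
    (fun x hx => Set.mem_iUnion.2 ⟨⟨x, hx⟩, mem_ball_self (hδ _)⟩)
  have hcover : ∀ x ∈ S, ∃ k : t, x ∈ Box k.1.1 (δ k.1) := by
    intro x hx
    obtain ⟨u, hu⟩ := Set.mem_iUnion.1 (ht hx)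
    obtain ⟨hut, hxu⟩ := Set.mem_iUnion.1 hu
    refine ⟨⟨u, hut⟩, fun c => ?_⟩
    have h1 : |x c - u.1 c| ≤ dist x u.1 := by
      rw [dist_eq_norm]
      exact PiLp.norm_apply_le (x - u.1) c
    rw [← sq_abs]
    exact pow_le_pow_left₀ (abs_nonneg _) (h1.trans (mem_ball.1 hxu).le) 2
  set DD : ℕ := ∑ k : t, D k.1 + 1 with hDD
  have hDle : ∀ k : t, D k.1 ≤ DD := fun k =>
    (Finset.single_le_sum (f := fun k : t => D k.1) (fun _ _ => Nat.zero_le _)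
      (Finset.mem_univ k)).trans (Nat.le_succ _)
  refine sdp_of_functionals S t (Fin m) (Option (Fin n))
    (fun k c => c.elim 1 (fun c => boxPoly (fun i => k.1.1 i) (δ k.1) c)) DD
    (fun k j => p k.1 j) ?_
  ext x
  constructor
  · intro hx
    obtain ⟨k0, hk0⟩ := hcover x hx
    refine ⟨fun k => if k = k0 then (MvPolynomial.aeval (R := ℝ) (fun i => x i)).toLinearMap else 0,
      ?_, ?_, ?_, ?_⟩
    · rw [Finset.sum_eq_single k0 (fun k _ hk => by simp [hk]) (by simp)]; simp
    · intro i
      rw [Finset.sum_eq_single k0 (fun k _ hk => by simp [hk]) (by simp)]; simp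
    · intro k c q hq
      by_cases hk : k = k0
      · subst hk
        have := eval_posF x k.1.1 (δ k.1) DD hk0 q hq
        simp only [if_true]
        cases c with
        | none => simpa using this.1
        | some c => exact this.2 c
      · simp [hk]
    · intro k j
      by_cases hk : k = k0
      · subst hk
        simp only [if_true]
        have h1 : ∀ i, 0 ≤ peval (g i) x := by rw [hS] at hx; exact hx
        have h2 := (hp1 k.1 x hk0).2 h1 j
        simpa [peval, MvPolynomial.aeval_eq_eval] using h2
      · simp [hk]
  · rintro ⟨L, hL1, hLx, hLq, hLp⟩
    have hPos : ∀ k : t, PosF (fun i => k.1.1 i) (δ k.1) DD (L k) := fun k q hq =>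
      ⟨by simpa using hLq k none q hq, fun c => hLq k (some c) q hq⟩
    have hw0 : ∀ k, 0 ≤ L k 1 := fun k => (hPos k).one
    have hpt : ∀ k : t, ∃ y : Rn n, y ∈ S ∧ ∀ i, L k (X i) = L k 1 * y i := by
      intro k
      rcases (hw0 k).eq_or_lt with h0 | h0
      · refine ⟨k.1.1, k.1.2, fun i => ?_⟩
        rw [(hPos k).zero_of_one (by omega) h0.symm i, ← h0, zero_mul]
      · set L' := (L k 1)⁻¹ • L k with hL'
        have hP' : PosF (fun i => k.1.1 i) (δ k.1) DD L' := fun q hq =>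
          ⟨mul_nonneg (inv_nonneg.2 h0.le) (hPos k q hq).1,
            fun c => mul_nonneg (inv_nonneg.2 h0.le) ((hPos k q hq).2 c)⟩
        have hL'1 : L' 1 = 1 := by simp [hL', h0.ne']
        set y : Rn n := WithLp.toLp 2 (fun i => L' (X i)) with hy
        have hyb : y ∈ Box k.1.1 (δ k.1) := fun c => hP'.mem_box (by omega) hL'1 c
        refine ⟨y, ?_, fun i => ?_⟩
        · rw [hS]
          refine (hp1 k.1 y hyb).1 fun i => ?_
          have h1 := hp2 k.1 i L' (hP'.mono (hDle k)) hL'1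
          exact le_trans (mul_nonneg (inv_nonneg.2 h0.le) (hLp k i)) h1
        · simp [hy, hL', h0.ne']
    choose y hyS hyL using hpt
    have hxy : x = ∑ k, L k 1 • y k := by
      ext i
      rw [hLx i]
      simp [hyL]
    rw [hxy]
    exact hconv.sum_mem (fun k _ => hw0 k) hL1 (fun k _ => hyS k)
/-- geometric sufficient condition (Theorem 5.1 of the paper):
under nonsingularity and strictly convex shape hypotheses, if each active defining
polynomial is sos-concave or its zero set is positively curved on `∂S`,
then `S` is SDP representable. -/
theorem isSDPRepresentable_of_strictlyConvexShape {n m : ℕ}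
    (g : Fin m → MvPolynomial (Fin n) ℝ) (S : Set (Rn n))
    (hS : S = {x : Rn n | ∀ i, 0 ≤ peval (g i) x})
    (hcpt : IsCompact S) (hconv : Convex ℝ S) (hint : (interior S).Nonempty)
    (hpos : ∀ x ∈ interior S, ∀ i, 0 < peval (g i) x)
    (hnsing : ∀ i : Fin m, ∀ u ∈ {x : Rn n | peval (g i) x = 0} ∩ S, pgrad (g i) u ≠ 0)
    (hshape : ∀ i : Fin m, ¬ SosConcave (g i) → StrictlyConvexShape (g i) S)
    (h : ∀ u ∈ frontier S, ∀ i, peval (g i) u = 0 →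
      SosConcave (g i) ∨ ∀ v : Fin n → ℝ, v ≠ 0 → (∑ j, pgrad (g i) u j * v j) = 0 →
        0 < -(∑ j, ∑ j', v j * phess (g i) u j j' * v j')) :
    IsSDPRepresentable S := by
  refine main_aux g S hS hcpt hconv fun u hu i => ?_
  have hui : 0 ≤ peval (g i) u := by
    rw [hS] at hu
    exact hu i
  rcases hui.eq_or_lt with h0 | h0
  · have hfr : u ∈ frontier S := by
      rw [hcpt.isClosed.frontier_eq]
      exact ⟨hu, fun hi => (hpos u hi i).ne h0⟩
    rcases h u hfr i h0.symm with h1 | h1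
    · exact local_sos u (g i) h1
    · exact local_strict u (g i) h0.symm h1
  · exact local_pos u (g i) h0
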